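/- arXiv:math/0703473 — 2 statements merged into one kernel-verified Lean document; each statement's English description precedes it below -/
import Mathlib

section
/- Let k ≥ 1. Then the map (a, b) ↦ a·(1−ζ) + b·ζ induces an isomorphism of additive groups ZMod (3^{k−1}) × ZMod (3^k) ≃ ℤ[ζ]/((1−ζ)^{2k−1}); in particular the additive group of ℤ[ζ]/((1−ζ)^{2k−1}) is isomorphic to ℤ/3^{k−1}ℤ ⊕ ℤ/3^kℤ. -/
open Polynomial

/-- The ring of Eisenstein integers `ℤ[ζ]`, with `ζ` a primitive cube root of unity. -/
abbrev Eisenstein : Type := AdjoinRoot (X ^ 2 + X + 1 : ℤ[X])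

/-- The distinguished primitive cube root of unity in the Eisenstein integers. -/
noncomputable def ζ : Eisenstein := AdjoinRoot.root (X ^ 2 + X + 1 : ℤ[X])

theorem zeta_rel : ζ ^ 2 + ζ + 1 = 0 := by
  have h := AdjoinRoot.mk_self (f := (X ^ 2 + X + 1 : ℤ[X]))
  rw [map_add, map_add, map_pow, AdjoinRoot.mk_X, map_one] at h
  exact h

theorem eis_rep (z : Eisenstein) : ∃ x y : ℤ, z = (x : Eisenstein) + y * ζ := by
  induction z using AdjoinRoot.induction_on with
  | ih p =>
    induction p using Polynomial.induction_on with
    | C a => exact ⟨a, 0, by simp⟩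
    | add p q hp hq =>
      obtain ⟨x, y, h⟩ := hp
      obtain ⟨x', y', h'⟩ := hq
      refine ⟨x + x', y + y', ?_⟩
      rw [map_add, h, h']
      push_cast
      ring
    | monomial n a h =>
      obtain ⟨x, y, h⟩ := h
      refine ⟨-y, x - y, ?_⟩
      rw [pow_succ X n, ← mul_assoc, map_mul, h, AdjoinRoot.mk_X]
      change ((x : Eisenstein) + y * ζ) * ζ = _
      push_cast
      linear_combination (y : Eisenstein) * zeta_rel

theorem eis_indep (x y : ℤ) (h : (x : Eisenstein) + y * ζ = 0) : x = 0 ∧ y = 0 := by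
  have h1 : AdjoinRoot.mk (X ^ 2 + X + 1 : ℤ[X]) (C y * X + C x) = 0 := by
    rw [map_add, map_mul, AdjoinRoot.mk_X]
    have e (t : ℤ) : AdjoinRoot.mk (X ^ 2 + X + 1 : ℤ[X]) (C t) = (t : Eisenstein) := by simp
    rw [e, e]
    change (y : Eisenstein) * ζ + x = 0
    linear_combination h
  rw [AdjoinRoot.mk_eq_zero] at h1
  have hm : (X ^ 2 + X + 1 : ℤ[X]).Monic := by monicity!
  have hd : (X ^ 2 + X + 1 : ℤ[X]).degree = 2 := by compute_degree!
  have h0 : (C y * X + C x : ℤ[X]) = 0 := by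
    by_contra hne
    refine hm.not_dvd_of_degree_lt hne ?_ h1
    rw [hd]
    exact lt_of_le_of_lt degree_linear_le (by norm_num)
  constructor
  · simpa using congrArg (fun p => coeff p 0) h0
  · simpa [coeff_C, -eq_intCast, -map_intCast] using congrArg (fun p => coeff p 1) h0

theorem pow_formula (m : ℕ) :
    (1 - ζ) ^ (2 * m + 1) = 3 ^ m * (1 - ζ) * (-ζ) ^ m := by
  have h : (1 - ζ) ^ 2 = 3 * (-ζ) := by linear_combination zeta_rel
  rw [pow_succ, pow_mul, h, mul_pow]
  ring

theorem ideal_eq (m : ℕ) :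
    Ideal.span {((1 - ζ) ^ (2 * m + 1))} = Ideal.span {((3 : Eisenstein) ^ m * (1 - ζ))} := by
  rw [pow_formula]
  apply Ideal.span_singleton_mul_right_unit
  apply IsUnit.pow
  exact IsUnit.of_mul_eq_one (ζ + 1) (by linear_combination -zeta_rel)

theorem mem_iff (m : ℕ) (a b : ℤ) :
    (a : Eisenstein) * (1 - ζ) + b * ζ ∈ Ideal.span {((1 - ζ) ^ (2 * m + 1))} ↔
      (3 : ℤ) ^ m ∣ a ∧ (3 : ℤ) ^ (m + 1) ∣ b := by
  rw [ideal_eq, Ideal.mem_span_singleton]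
  constructor
  · rintro ⟨w, hw⟩
    obtain ⟨x, y, rfl⟩ := eis_rep w
    obtain ⟨h1, h2⟩ := eis_indep (a - 3 ^ m * (x + y))
      (b - a + 3 ^ m * (x + y) - 3 ^ (m + 1) * y) (by
        push_cast
        linear_combination hw - 3 ^ m * (y : Eisenstein) * zeta_rel)
    exact ⟨⟨x + y, by linarith⟩, ⟨y, by linarith⟩⟩
  · rintro ⟨⟨c, rfl⟩, ⟨d, rfl⟩⟩
    refine ⟨c + d * (ζ - 1), ?_⟩
    push_cast
    linear_combination 3 ^ m * (d : Eisenstein) * zeta_rel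

theorem eis_equiv (m : ℕ) :
    ∃ e : (ZMod (3 ^ m) × ZMod (3 ^ (m + 1))) ≃+
        (Eisenstein ⧸ Ideal.span {((1 - ζ) ^ (2 * m + 1))}),
      ∀ a b : ℤ,
        e ((a : ZMod (3 ^ m)), (b : ZMod (3 ^ (m + 1)))) =
          Ideal.Quotient.mk (Ideal.span {((1 - ζ) ^ (2 * m + 1))})
            ((a : Eisenstein) * (1 - ζ) + (b : Eisenstein) * ζ) := by
  set I := Ideal.span {((1 - ζ) ^ (2 * m + 1))} with hI
  let f (u : Eisenstein) : ℤ →+ Eisenstein ⧸ I :=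
    (Ideal.Quotient.mk I).toAddMonoidHom.comp
      ((AddMonoidHom.mulRight u).comp (Int.castAddHom Eisenstein))
  have hf (u : Eisenstein) (a : ℤ) : f u a = Ideal.Quotient.mk I ((a : Eisenstein) * u) := rfl
  have h1 : f (1 - ζ) ((3 ^ m : ℕ) : ℤ) = 0 := by
    rw [hf, Ideal.Quotient.eq_zero_iff_mem]
    have := (mem_iff m (3 ^ m) 0).2 (by simp)
    simpa using this
  have h2 : f ζ ((3 ^ (m + 1) : ℕ) : ℤ) = 0 := by
    rw [hf, Ideal.Quotient.eq_zero_iff_mem]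
    have := (mem_iff m 0 (3 ^ (m + 1))).2 (by simp)
    simpa using this
  let g : (ZMod (3 ^ m) × ZMod (3 ^ (m + 1))) →+ Eisenstein ⧸ I :=
    (ZMod.lift (3 ^ m) ⟨f (1 - ζ), h1⟩).coprod (ZMod.lift (3 ^ (m + 1)) ⟨f ζ, h2⟩)
  have hg (a b : ℤ) : g ((a : ZMod (3 ^ m)), (b : ZMod (3 ^ (m + 1)))) =
      Ideal.Quotient.mk I ((a : Eisenstein) * (1 - ζ) + (b : Eisenstein) * ζ) := by
    rw [map_add, ← hf, ← hf]
    simp only [g, AddMonoidHom.coprod_apply, ZMod.lift_coe]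
  refine ⟨AddEquiv.ofBijective g ⟨?_, ?_⟩, hg⟩
  · rw [injective_iff_map_eq_zero]
    rintro ⟨a, b⟩ h
    obtain ⟨a, rfl⟩ := ZMod.intCast_surjective a
    obtain ⟨b, rfl⟩ := ZMod.intCast_surjective b
    rw [hg, Ideal.Quotient.eq_zero_iff_mem, mem_iff] at h
    rw [Prod.mk_eq_zero, ZMod.intCast_zmod_eq_zero_iff_dvd, ZMod.intCast_zmod_eq_zero_iff_dvd]
    exact_mod_cast h
  · intro q
    obtain ⟨z, rfl⟩ := Ideal.Quotient.mk_surjective q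
    obtain ⟨x, y, rfl⟩ := eis_rep z
    refine ⟨((x : ZMod (3 ^ m)), ((x + y : ℤ) : ZMod (3 ^ (m + 1)))), ?_⟩
    rw [hg]
    congr 1
    push_cast
    ring

/-- for `k ≥ 1`, the map `(a, b) ↦ a·(1−ζ) + b·ζ` induces an additive-group
isomorphism `ZMod (3^(k-1)) × ZMod (3^k) ≃ ℤ[ζ]/((1−ζ)^(2k-1))`. -/
theorem eisenstein_quotient_odd_power_of_one_sub_zeta (k : ℕ) (hk : 1 ≤ k) :
    ∃ e : (ZMod (3 ^ (k - 1)) × ZMod (3 ^ k)) ≃+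
        (Eisenstein ⧸ Ideal.span {((1 - ζ) ^ (2 * k - 1))}),
      ∀ a b : ℤ,
        e ((a : ZMod (3 ^ (k - 1))), (b : ZMod (3 ^ k))) =
          Ideal.Quotient.mk (Ideal.span {((1 - ζ) ^ (2 * k - 1))})
            ((a : Eisenstein) * (1 - ζ) + (b : Eisenstein) * ζ) := by
  obtain ⟨m, rfl⟩ : ∃ m, k = m + 1 := ⟨k - 1, by omega⟩
  exact eis_equiv m
end

section
/- Let p be a rational prime with p ≡ 1 (mod 6), and let π, π' ∈ ℤ[ζ] be prime elements such that π·π' is associated to (p : ℤ[ζ]). Then for all integers 0 ≤ l ≤ μ, the additive group of the quotient ℤ[ζ]/(π^l · π'^{μ−l}) is isomorphic to ZMod (p^l) × ZMod (p^{μ−l}). -/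
open Polynomial

lemma eis_cyc {R : Type*} [CommRing R] [IsDomain R] (p : ℕ) (hp : p.Prime) (a b : R)
    (ha : Prime a) (hab : IsCoprime a b) (hassoc : Associated (a * b) (p : R))
    (hs : ∀ x : R, ∃ n : ℤ, a ∣ x - n) (l : ℕ) :
    Nonempty ((R ⧸ Ideal.span {a ^ l}) ≃+* ZMod (p ^ l)) := by
  have hpl : a ^ l ∣ (p : R) ^ l :=
    pow_dvd_pow_of_dvd ((dvd_mul_right a b).trans hassoc.dvd) l
  -- step: every x is n + p * y + a^l * z
  have h1 : ∀ x : R, ∃ (n : ℤ) (y : R), a ^ l ∣ x - n - p * y := by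
    intro x
    obtain ⟨n, y, hy⟩ := hs x
    obtain ⟨u, hu⟩ := hassoc
    obtain ⟨s, t, hst⟩ : IsCoprime (a ^ l) b := hab.pow_left
    -- t * b = 1 - s a^l ; a y = a y (s a^l + t b) = .. + p * u⁻¹ t y
    refine ⟨n, ↑u⁻¹ * t * y, a * y * s, ?_⟩
    have hui : (u : R) * ↑u⁻¹ = 1 := by simp
    rw [hy, ← hu]
    linear_combination (- a * y) * hst - a * b * t * y * hui
  have h2 : ∀ (k : ℕ) (x : R), ∃ (n : ℤ) (y : R), a ^ l ∣ x - n - p ^ k * y := by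
    intro k
    induction k with
    | zero => intro x; exact ⟨0, x, by simp⟩
    | succ k ih =>
      intro x
      obtain ⟨n, y, z, hz⟩ := ih x
      obtain ⟨m, w, v, hv⟩ := h1 y
      refine ⟨n + p ^ k * m, w, z + p ^ k * v, ?_⟩
      push_cast
      linear_combination hz + p ^ k * hv
  have h3 : ∀ x : R, ∃ n : ℤ, a ^ l ∣ x - n := by
    intro x
    obtain ⟨n, y, hy⟩ := h2 l x
    refine ⟨n, ?_⟩
    have := dvd_add hy (hpl.mul_right y)
    simpa using this
  have hsurj : Function.Surjective (Int.castRingHom (R ⧸ Ideal.span {a ^ l})) := by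
    intro q
    obtain ⟨x, rfl⟩ := Ideal.Quotient.mk_surjective q
    obtain ⟨n, hn⟩ := h3 x
    refine ⟨n, ?_⟩
    have : Ideal.Quotient.mk (Ideal.span {a ^ l}) x = Ideal.Quotient.mk _ (n : R) := by
      rw [Ideal.Quotient.eq, Ideal.mem_span_singleton]; exact hn
    rw [this]; simp
  have hker : RingHom.ker (Int.castRingHom (R ⧸ Ideal.span {a ^ l})) =
      Ideal.span {((p ^ l : ℕ) : ℤ)} := by
    ext n
    rw [RingHom.mem_ker, Ideal.mem_span_singleton]
    have e : (Int.castRingHom (R ⧸ Ideal.span {a ^ l})) n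
        = Ideal.Quotient.mk (Ideal.span {a ^ l}) (n : R) := by simp
    rw [e, Ideal.Quotient.eq_zero_iff_mem, Ideal.mem_span_singleton]
    constructor
    · intro h
      -- induct : a^l ∣ n → p^l ∣ n
      have key : ∀ k ≤ l, ((p ^ k : ℕ) : ℤ) ∣ n := by
        intro k
        induction k with
        | zero => intro _; simp
        | succ k ih =>
          intro hk
          obtain ⟨m, rfl⟩ := ih (by omega)
          push_cast at h ⊢
          rw [pow_succ]
          apply mul_dvd_mul_left
          by_contra hm
          have hcop : IsCoprime (p : ℤ) m :=
            (Prime.coprime_iff_not_dvd (Nat.prime_iff_prime_int.mp hp)).2 hm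
          have hcopR : IsCoprime (p : R) (m : R) := by
            simpa using hcop.map (Int.castRingHom R)
          have ham : ¬ a ∣ (m : R) := by
            intro hd
            exact ha.not_isUnit (hcopR.isUnit_of_dvd' ((dvd_mul_right a b).trans hassoc.dvd) hd)
          have hanb : ¬ a ∣ b := fun hd => ha.not_isUnit (hab.isUnit_of_dvd' dvd_rfl hd)
          have h4 : a ^ (k+1) ∣ (p : R) ^ k * m := (pow_dvd_pow a hk).trans h
          have h5 : a ^ (k+1) ∣ (a * b) ^ k * m :=
            h4.trans (mul_dvd_mul_right (hassoc.symm.pow_pow).dvd _)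
          rw [mul_pow, pow_succ, mul_assoc,
            mul_dvd_mul_iff_left (pow_ne_zero k ha.ne_zero)] at h5
          rcases ha.dvd_or_dvd h5 with h6 | h6
          · exact hanb (ha.dvd_of_dvd_pow h6)
          · exact ham h6
      exact key l le_rfl
    · rintro ⟨m, rfl⟩
      push_cast
      exact hpl.mul_right _
  exact ⟨(RingHom.quotientKerEquivOfSurjective hsurj).symm.trans
    ((Ideal.quotEquivOfEq hker).trans (Int.quotientSpanNatEquivZMod (p ^ l)))⟩

instance eis_domain : IsDomain Eisenstein := by
  apply AdjoinRoot.isDomain_of_prime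
  rw [← cyclotomic_three ℤ]
  exact (cyclotomic.irreducible (by norm_num)).prime

lemma eis_root : (AdjoinRoot.root (X ^ 2 + X + 1 : ℤ[X])) ^ 2 + AdjoinRoot.root (X ^ 2 + X + 1 : ℤ[X]) + 1
    = (0 : Eisenstein) := by
  have := AdjoinRoot.eval₂_root (X ^ 2 + X + 1 : ℤ[X])
  simpa using this

lemma eis_rep_s9 (x : Eisenstein) : ∃ c d : ℤ, x = (c : Eisenstein) + (d : Eisenstein) * AdjoinRoot.root (X ^ 2 + X + 1 : ℤ[X]) := by
  induction x using AdjoinRoot.induction_on with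
  | ih f =>
    induction f using Polynomial.induction_on' with
    | add f g hf hg =>
      obtain ⟨c, d, h⟩ := hf
      obtain ⟨c', d', h'⟩ := hg
      exact ⟨c + c', d + d', by rw [map_add, h, h']; push_cast; ring⟩
    | monomial n z =>
      induction n with
      | zero => exact ⟨z, 0, by simp⟩
      | succ n ih =>
        obtain ⟨c, d, h⟩ := ih
        refine ⟨-d, c - d, ?_⟩
        rw [← Polynomial.monomial_mul_X, map_mul, h, AdjoinRoot.mk_X]
        push_cast
        linear_combination (d : Eisenstein) * eis_root

lemma eis_r (p : ℕ) (hp : p.Prime) (hp6 : p % 6 = 1) : ∃ r : ℤ, (p : ℤ) ∣ r ^ 2 + r + 1 := by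
  have := Fact.mk hp
  have : Fact (Nat.Prime 3) := ⟨Nat.prime_three⟩
  obtain ⟨u, hu⟩ := exists_prime_orderOf_dvd_card (G := (ZMod p)ˣ) 3 (by
    rw [ZMod.card_units]; omega)
  have h3 : (u : ZMod p) ^ 3 = 1 := by
    rw [← Units.val_pow_eq_pow_val, ← hu, pow_orderOf_eq_one]; rfl
  have h1 : (u : ZMod p) ≠ 1 := by
    intro h
    have : u = 1 := Units.ext h
    rw [this] at hu; simp at hu
  obtain ⟨r, hr⟩ := ZMod.intCast_surjective (u : ZMod p)
  refine ⟨r, ?_⟩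
  rw [← ZMod.intCast_zmod_eq_zero_iff_dvd]
  push_cast
  rw [hr]
  have : ((u : ZMod p) - 1) * ((u : ZMod p) ^ 2 + u + 1) = 0 := by linear_combination h3
  exact (mul_eq_zero.mp this).resolve_left (sub_ne_zero.mpr h1)

/-- a prime divisor of `p` divides `ζ - r` for some root `r` mod `p`. -/
lemma eis_div (p : ℕ) (hp : p.Prime) (hp6 : p % 6 = 1) (a : Eisenstein) (ha : Prime a)
    (hap : a ∣ (p : Eisenstein)) :
    ∃ r : ℤ, (p : ℤ) ∣ r ^ 2 + r + 1 ∧ a ∣ AdjoinRoot.root (X ^ 2 + X + 1 : ℤ[X]) - (r : Eisenstein) := by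
  obtain ⟨r, hr⟩ := eis_r p hp hp6
  have hd : a ∣ (AdjoinRoot.root (X ^ 2 + X + 1 : ℤ[X]) - (r : Eisenstein)) *
      (AdjoinRoot.root (X ^ 2 + X + 1 : ℤ[X]) - ((-1 - r : ℤ) : Eisenstein)) := by
    refine hap.trans ?_
    obtain ⟨k, hk⟩ := hr
    refine ⟨-k, ?_⟩
    have hk' := congrArg (Int.cast : ℤ → Eisenstein) hk
    push_cast at hk' ⊢
    linear_combination eis_root - hk'
  rcases ha.dvd_or_dvd hd with h | h
  · exact ⟨r, hr, h⟩
  · refine ⟨-1 - r, ?_, h⟩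
    convert hr using 1; ring

lemma eis_surj (a : Eisenstein) (r : ℤ) (h : a ∣ AdjoinRoot.root (X ^ 2 + X + 1 : ℤ[X]) - (r : Eisenstein))
    (x : Eisenstein) : ∃ n : ℤ, a ∣ x - n := by
  obtain ⟨c, d, rfl⟩ := eis_rep_s9 x
  refine ⟨c + d * r, ?_⟩
  have := h.mul_left (d : Eisenstein)
  convert this using 1
  push_cast; ring

lemma eis_coprime (p : ℕ) (hp : p.Prime) (hp6 : p % 6 = 1)
    (a b : Eisenstein) (ha : Prime a) (hb : Prime b)
    (hassoc : Associated (a * b) (p : Eisenstein)) : IsCoprime a b := by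
  have := Fact.mk hp
  have hap : a ∣ (p : Eisenstein) := (dvd_mul_right a b).trans hassoc.dvd
  obtain ⟨r, hr, har⟩ := eis_div p hp hp6 a ha hap
  have h3 : ¬ (p : ℤ) ∣ 2 * r + 1 := by
    intro h
    have h4 : (p : ℤ) ∣ 3 := by
      have := dvd_sub (hr.mul_left 4) (h.mul_left (2 * r + 1))
      have e : (3 : ℤ) = 4 * (r ^ 2 + r + 1) - (2 * r + 1) * (2 * r + 1) := by ring
      rw [e]; exact this
    have h5 : p ∣ 3 := by exact_mod_cast h4
    have := (Nat.prime_dvd_prime_iff_eq hp Nat.prime_three).1 h5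
    subst this; omega
  have hint : ∀ n : ℤ, ¬ (p : ℤ) ∣ n → IsCoprime a (n : Eisenstein) := by
    intro n hn
    have hcop : IsCoprime (p : ℤ) n :=
      (Prime.coprime_iff_not_dvd (Nat.prime_iff_prime_int.mp hp)).2 hn
    have hcopR : IsCoprime (p : Eisenstein) (n : Eisenstein) := by
      simpa using hcop.map (Int.castRingHom Eisenstein)
    exact hcopR.of_isCoprime_of_dvd_left hap
  obtain ⟨n, y, hy⟩ := eis_surj a r har b
  by_cases hn : (p : ℤ) ∣ n
  · exfalso
    have hab : a ∣ b := by
      have h1 : (p : Eisenstein) ∣ n := by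
        simpa using map_dvd (Int.castRingHom Eisenstein) hn
      have := dvd_add (Dvd.intro _ hy.symm) (hap.trans h1)
      simpa using this
    have hass : Associated a b := (ha.dvd_prime_iff_associated hb).1 hab
    have hsq : Associated (a ^ 2) (p : Eisenstein) := by
      rw [sq a]; exact (hass.mul_left a).trans hassoc
    have hd : a ^ 2 ∣ (AdjoinRoot.root (X ^ 2 + X + 1 : ℤ[X]) - (r : Eisenstein)) *
        (AdjoinRoot.root (X ^ 2 + X + 1 : ℤ[X]) - ((-1 - r : ℤ) : Eisenstein)) := by
      refine hsq.dvd.trans ?_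
      obtain ⟨k, hk⟩ := hr
      refine ⟨-k, ?_⟩
      have hk' := congrArg (Int.cast : ℤ → Eisenstein) hk
      push_cast at hk' ⊢
      linear_combination eis_root - hk'
    have hnd : ¬ a ∣ (AdjoinRoot.root (X ^ 2 + X + 1 : ℤ[X]) - ((-1 - r : ℤ) : Eisenstein)) := by
      intro h
      have h1 : a ∣ ((2 * r + 1 : ℤ) : Eisenstein) := by
        convert dvd_sub h har using 1
        push_cast; ring
      exact ha.not_isUnit ((hint _ h3).isUnit_of_dvd' dvd_rfl h1)
    have h2 := hsq.symm.dvd.trans (ha.pow_dvd_of_dvd_mul_right 2 hnd hd)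
    have hr' := (ZMod.intCast_zmod_eq_zero_iff_dvd _ p).2 hr
    push_cast at hr'
    let φ : Eisenstein →+* ZMod p := AdjoinRoot.lift (Int.castRingHom (ZMod p))
      (-1 - (r : ZMod p)) (by simp; linear_combination hr')
    have h4 := map_dvd φ h2
    rw [map_sub, map_natCast, map_intCast, CharP.cast_eq_zero, zero_dvd_iff] at h4
    have h5 : φ (AdjoinRoot.root (X ^ 2 + X + 1 : ℤ[X])) = -1 - (r : ZMod p) := AdjoinRoot.lift_root _
    rw [h5] at h4
    apply h3
    rw [← ZMod.intCast_zmod_eq_zero_iff_dvd]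
    push_cast
    linear_combination -h4
  · have h1 := hint n hn
    have : b = n + a * y := by linear_combination hy
    rw [this]
    exact h1.add_mul_left_right y

/-- for a rational prime `p ≡ 1 (mod 6)` and primes `π, π' ∈ ℤ[ζ]` with
`π·π'` associated to `p`, for all `0 ≤ l ≤ μ` the additive group of
`ℤ[ζ]/(π^l · π'^(μ−l))` is isomorphic to `ZMod (p^l) × ZMod (p^(μ−l))`. -/
theorem eisenstein_quotient_mixed_prime_powers (p : ℕ) (hp : p.Prime) (hp6 : p % 6 = 1)
    (π π' : Eisenstein) (hπ : Prime π) (hπ' : Prime π')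
    (hassoc : Associated (π * π') (p : Eisenstein)) :
    ∀ μ l : ℕ, l ≤ μ →
      Nonempty ((Eisenstein ⧸ Ideal.span {π ^ l * π' ^ (μ - l)}) ≃+
        (ZMod (p ^ l) × ZMod (p ^ (μ - l)))) := by
  intro μ l _
  have hc := eis_coprime p hp hp6 π π' hπ hπ' hassoc
  have hassoc' : Associated (π' * π) (p : Eisenstein) := by rwa [mul_comm]
  obtain ⟨r, _, h1⟩ := eis_div p hp hp6 π hπ ((dvd_mul_right _ _).trans hassoc.dvd)
  obtain ⟨r', _, h1'⟩ := eis_div p hp hp6 π' hπ' ((dvd_mul_right _ _).trans hassoc'.dvd)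
  obtain ⟨e⟩ := eis_cyc p hp π π' hπ hc hassoc (eis_surj π r h1) l
  obtain ⟨e'⟩ := eis_cyc p hp π' π hπ' hc.symm hassoc' (eis_surj π' r' h1') (μ - l)
  have hcop : IsCoprime (Ideal.span {π ^ l}) (Ideal.span {π' ^ (μ - l)}) := by
    rw [Ideal.isCoprime_span_singleton_iff]
    exact hc.pow
  have heq : Ideal.span {π ^ l * π' ^ (μ - l)} =
      Ideal.span {π ^ l} * Ideal.span {π' ^ (μ - l)} :=
    (Ideal.span_singleton_mul_span_singleton _ _).symm
  exact ⟨((Ideal.quotEquivOfEq heq).trans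
    ((Ideal.quotientMulEquivQuotientProd _ _ hcop).trans (RingEquiv.prodCongr e e'))).toAddEquiv⟩
end
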